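/- Let Γ be an access structure on 6 players satisfying monotonicity, no-cloning and no-redundancy that admits a pure QSS state. Then Γ_min contains at most one set of cardinality 2. -/

import Mathlib

open Finset

/-- Monotonicity of an access structure on `n` players (players = `Fin n`). -/
def Monotonic {n : ℕ} (Γ : Finset (Fin n) → Prop) : Prop :=
  ∀ A B : Finset (Fin n), Γ A → A ⊆ B → Γ B

/-- No-cloning: a set is authorized iff its complement is not. -/
def NoCloning {n : ℕ} (Γ : Finset (Fin n) → Prop) : Prop :=
  ∀ A : Finset (Fin n), Γ A ↔ ¬ Γ Aᶜ

/-- `A` is a minimal authorized set of `Γ`. -/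
def IsMinimal {n : ℕ} (Γ : Finset (Fin n) → Prop) (A : Finset (Fin n)) : Prop :=
  Γ A ∧ ∀ B : Finset (Fin n), B ⊂ A → ¬ Γ B

/-- No-redundancy: every player lies in some minimal authorized set. -/
def NoRedundancy {n : ℕ} (Γ : Finset (Fin n) → Prop) : Prop :=
  ∀ i : Fin n, ∃ A : Finset (Fin n), IsMinimal Γ A ∧ i ∈ A

noncomputable section

/-- Combine an assignment on `A` and one on `Aᶜ` into a full bit string. -/
def glue {m : ℕ} (A : Finset (Fin m)) (u : {x // x ∈ A} → Fin 2)
    (w : {x // x ∈ Aᶜ} → Fin 2) : Fin m → Fin 2 :=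
  fun x => if h : x ∈ A then u ⟨x, h⟩ else w ⟨x, Finset.mem_compl.mpr h⟩

/-- Reduced density matrix of the pure state `ψ` on the qubit positions in `A`:
the partial trace over the positions outside `A` of `ψψ†`. -/
def reducedDensity {m : ℕ} (ψ : (Fin m → Fin 2) → ℂ) (A : Finset (Fin m)) :
    Matrix ({x // x ∈ A} → Fin 2) ({x // x ∈ A} → Fin 2) ℂ :=
  fun u v => ∑ w : {x // x ∈ Aᶜ} → Fin 2,
    ψ (glue A u w) * (starRingEnd ℂ) (ψ (glue A v w))

/-- The reduction of `ψ` to `A` is maximally mixed, i.e. equals `2^{-|A|} · I`. -/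
def MaximallyMixed {m : ℕ} (ψ : (Fin m → Fin 2) → ℂ) (A : Finset (Fin m)) : Prop :=
  reducedDensity ψ A =
    ((2 : ℂ) ^ A.card)⁻¹ •
      (1 : Matrix ({x // x ∈ A} → Fin 2) ({x // x ∈ A} → Fin 2) ℂ)

open Classical in
/-- Von Neumann entropy (natural logarithm): sum of `-λ log λ` over the eigenvalues. -/
def vnEntropy {ι : Type} [Fintype ι] [DecidableEq ι] (ρ : Matrix ι ι ℂ) : ℝ :=
  if h : ρ.IsHermitian then ∑ i, Real.negMulLog (h.eigenvalues i) else 0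

/-- Entropy of the reduction of `ψ` to the set `A` of qubit positions. -/
def Sent {m : ℕ} (ψ : (Fin m → Fin 2) → ℂ) (A : Finset (Fin m)) : ℝ :=
  vnEntropy (reducedDensity ψ A)

/-- The qubit positions (in `{0,1,…,n} = Fin (n+1)`, where `0` is the reference qubit)
of a set of players `A ⊆ Fin n`: player `i` holds position `i.succ`. -/
def posOf {n : ℕ} (A : Finset (Fin n)) : Finset (Fin (n + 1)) := A.image Fin.succ

/-- `ψ` is a pure QSS state for the access structure `Γ`: a normalized pure state of
`n+1` qubits (position `0` being the reference qubit `R`) satisfying Recoverability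
`S(R) + S(A) - S(R ∪ A) = 2 log 2` for authorized `A` and Secrecy
`S(R) + S(B) - S(R ∪ B) = 0` for unauthorized `B`. -/
structure IsPureQSSState {n : ℕ} (Γ : Finset (Fin n) → Prop)
    (ψ : (Fin (n + 1) → Fin 2) → ℂ) : Prop where
  normalized : ∑ x : Fin (n + 1) → Fin 2, ‖ψ x‖ ^ 2 = 1
  recover : ∀ A : Finset (Fin n), Γ A →
    Sent ψ {0} + Sent ψ (posOf A) - Sent ψ (insert 0 (posOf A)) = 2 * Real.log 2
  secrecy : ∀ B : Finset (Fin n), ¬ Γ B →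
    Sent ψ {0} + Sent ψ (posOf B) - Sent ψ (insert 0 (posOf B)) = 0

end

/-!
Write `S` for the entropy of a joint share and `L = log 2`. Purity turns recoverability and secrecy
into `S(X) = S(Xᶜ) + L` for every authorized `X`. Together with subadditivity this has two
consequences.

* If `X` and `Y` are disjoint and unauthorized, then `L ≤ S((X ∪ Y)ᶜ)`.
* Suppose two minimal pairs `{a, b}` and `{a, c}` share a player, and let `D` be the set of the
  players other than `a`, `b`, `c`. As a qubit share has entropy at most `L`, subadditivity is
  tight: `S(b) = S(c) = L`, `S({a, b}ᶜ) = S(a)`, and `c` is uncorrelated with `{a, c}ᶜ = D ∪ {b}`.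
  Then `c` is uncorrelated with `D` as well, so `S(a) = S({a, b}ᶜ) = S(D ∪ {c}) = S(D) + L`,
  and `S(a) ≤ L` forces `S(D) ≤ 0`.

Hence `{b, c}` cannot be unauthorized. But authorized sets intersect pairwise, so if all three pairs
inside `{a, b, c}` are authorized, every minimal set lies in `{a, b, c}`, against no-redundancy.

The only entropy inequality used is subadditivity together with its equality case. Both reduce to
the classical statements by rotating each marginal to its eigenbasis: the entropy of a state is at
most that of its diagonal, with equality only for diagonal states.
-/

section ShannonEntropy

open InformationTheory

variable {α β : Type*} [Fintype α] [Fintype β] {d : α × β → ℝ} {p : α → ℝ} {q : β → ℝ}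

lemma mul_klFun_div_marginals (hd : ∀ x, 0 ≤ d x) (hp : ∀ a, ∑ b, d (a, b) = p a)
    (hq : ∀ b, ∑ a, d (a, b) = q b) (a : α) (b : β) :
    p a * q b * klFun (d (a, b) / (p a * q b)) =
      p a * q b - d (a, b) - Real.negMulLog (d (a, b))
        - d (a, b) * Real.log (p a) - d (a, b) * Real.log (q b) := by
  rcases (hd (a, b)).eq_or_lt with hzero | hpos
  · simp [← hzero, klFun_zero]
  have hpa : 0 < p a := hpos.trans_le <|
    hp a ▸ Finset.single_le_sum (fun b _ ↦ hd (a, b)) (Finset.mem_univ b)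
  have hqb : 0 < q b := hpos.trans_le <|
    hq b ▸ Finset.single_le_sum (fun a _ ↦ hd (a, b)) (Finset.mem_univ a)
  rw [klFun_apply, Real.log_div hpos.ne' (mul_pos hpa hqb).ne', Real.log_mul hpa.ne' hqb.ne',
    Real.negMulLog]
  field_simp
  ring

lemma sum_negMulLog_marginals_sub_eq_sum_klFun (hd : ∀ x, 0 ≤ d x)
    (hp : ∀ a, ∑ b, d (a, b) = p a) (hq : ∀ b, ∑ a, d (a, b) = q b) (hsum : ∑ x, d x = 1) :
    ∑ a, Real.negMulLog (p a) + ∑ b, Real.negMulLog (q b) - ∑ x, Real.negMulLog (d x) =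
      ∑ x : α × β, p x.1 * q x.2 * klFun (d x / (p x.1 * q x.2)) := by
  have hsump : ∑ a, p a = 1 := by rw [← hsum, Fintype.sum_prod_type]; simp only [hp]
  have hsumq : ∑ b, q b = 1 := by rw [← hsum, Fintype.sum_prod_type_right]; simp only [hq]
  have cross_left : ∑ x : α × β, d x * Real.log (p x.1) = -∑ a, Real.negMulLog (p a) := by
    simp [Fintype.sum_prod_type, ← Finset.sum_mul, hp, Real.negMulLog]
  have cross_right : ∑ x : α × β, d x * Real.log (q x.2) = -∑ b, Real.negMulLog (q b) := by
    simp [Fintype.sum_prod_type_right, ← Finset.sum_mul, hq, Real.negMulLog]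
  have product : ∑ x : α × β, p x.1 * q x.2 = 1 := by
    rw [Fintype.sum_prod_type, ← Finset.sum_mul_sum, hsump, hsumq, one_mul]
  simp only [mul_klFun_div_marginals hd hp hq, Finset.sum_sub_distrib, cross_left, cross_right,
    product, hsum]
  ring

lemma mul_klFun_div_nonneg {x y : ℝ} (hx : 0 ≤ x) (hy : 0 ≤ y) : 0 ≤ y * klFun (x / y) :=
  mul_nonneg hy (klFun_nonneg (div_nonneg hx hy))

lemma sum_negMulLog_le_add_marginals (hd : ∀ x, 0 ≤ d x) (hp : ∀ a, ∑ b, d (a, b) = p a)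
    (hq : ∀ b, ∑ a, d (a, b) = q b) (hsum : ∑ x, d x = 1) :
    ∑ x, Real.negMulLog (d x) ≤ ∑ a, Real.negMulLog (p a) + ∑ b, Real.negMulLog (q b) := by
  rw [← sub_nonneg, sum_negMulLog_marginals_sub_eq_sum_klFun hd hp hq hsum]
  exact Finset.sum_nonneg fun x _ ↦ mul_klFun_div_nonneg (hd x) <| mul_nonneg
    (hp x.1 ▸ Finset.sum_nonneg fun _ _ ↦ hd _) (hq x.2 ▸ Finset.sum_nonneg fun _ _ ↦ hd _)

lemma eq_mul_marginals_of_sum_negMulLog_eq_add (hd : ∀ x, 0 ≤ d x)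
    (hp : ∀ a, ∑ b, d (a, b) = p a) (hq : ∀ b, ∑ a, d (a, b) = q b) (hsum : ∑ x, d x = 1)
    (heq : ∑ x, Real.negMulLog (d x) = ∑ a, Real.negMulLog (p a) + ∑ b, Real.negMulLog (q b))
    (a : α) (b : β) : d (a, b) = p a * q b := by
  have hpq (x : α × β) : 0 ≤ p x.1 * q x.2 := mul_nonneg
    (hp x.1 ▸ Finset.sum_nonneg fun _ _ ↦ hd _) (hq x.2 ▸ Finset.sum_nonneg fun _ _ ↦ hd _)
  have hkl : p a * q b * klFun (d (a, b) / (p a * q b)) = 0 := by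
    have hzero := sum_negMulLog_marginals_sub_eq_sum_klFun hd hp hq hsum
    rw [heq, sub_self, eq_comm, Finset.sum_eq_zero_iff_of_nonneg fun x _ ↦
      mul_klFun_div_nonneg (hd x) (hpq x)] at hzero
    exact hzero (a, b) (Finset.mem_univ _)
  rcases mul_eq_zero.mp hkl with hzero | hzero
  · have hle_left : d (a, b) ≤ p a :=
      hp a ▸ Finset.single_le_sum (fun b _ ↦ hd (a, b)) (Finset.mem_univ b)
    have hle_right : d (a, b) ≤ q b :=
      hq b ▸ Finset.single_le_sum (fun a _ ↦ hd (a, b)) (Finset.mem_univ a)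
    rcases mul_eq_zero.mp hzero with h | h <;> linarith [hd (a, b)]
  · rw [klFun_eq_zero_iff (div_nonneg (hd _) (hpq (a, b)))] at hzero
    exact eq_of_div_eq_one hzero

end ShannonEntropy

section DensityMatrices

open Matrix
open scoped ComplexOrder Kronecker

variable {ι κ R : Type*}

/-- `ρ` is a quantum state of a system with orthonormal basis `ι`: positive semidefinite of unit
trace. -/
structure IsDensityMatrix [Fintype ι] (ρ : Matrix ι ι ℂ) : Prop where
  posSemidef : ρ.PosSemidef
  trace_eq_one : ρ.trace = 1

namespace IsDensityMatrix

variable [Fintype ι] {ρ : Matrix ι ι ℂ} (hρ : IsDensityMatrix ρ)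
include hρ

lemma isHermitian : ρ.IsHermitian :=
  hρ.posSemidef.isHermitian

lemma re_diag_nonneg (i : ι) : 0 ≤ (ρ i i).re :=
  (Complex.nonneg_iff.mp hρ.posSemidef.diag_nonneg).1

lemma sum_re_diag : ∑ i, (ρ i i).re = 1 := by
  rw [← Complex.re_sum]
  exact (congrArg Complex.re hρ.trace_eq_one).trans Complex.one_re

lemma unitary_conj [DecidableEq ι] {U : Matrix ι ι ℂ} (hU : U ∈ unitary (Matrix ι ι ℂ)) :
    IsDensityMatrix (Uᴴ * ρ * U) where
  posSemidef := hρ.posSemidef.conjTranspose_mul_mul_same U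
  trace_eq_one := by
    rw [trace_mul_comm, ← mul_assoc, ← star_eq_conjTranspose, Unitary.mul_star_self_of_mem hU,
      one_mul, hρ.trace_eq_one]

lemma submatrix_equiv [Fintype κ] (e : κ ≃ ι) : IsDensityMatrix (ρ.submatrix e e) where
  posSemidef := hρ.posSemidef.submatrix e
  trace_eq_one := by
    rw [← hρ.trace_eq_one]
    exact e.sum_comp fun i ↦ ρ i i

end IsDensityMatrix

/-- The partial trace of `ρ` over the second tensor factor. -/
def partialTraceRight [Fintype κ] [AddCommMonoid R] (ρ : Matrix (ι × κ) (ι × κ) R) :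
    Matrix ι ι R :=
  of fun i i' ↦ ∑ k, ρ (i, k) (i', k)

/-- The partial trace of `ρ` over the first tensor factor. -/
def partialTraceLeft [Fintype ι] [AddCommMonoid R] (ρ : Matrix (ι × κ) (ι × κ) R) :
    Matrix κ κ R :=
  of fun k k' ↦ ∑ i, ρ (i, k) (i, k')

variable [Fintype ι] [Fintype κ]

lemma IsDensityMatrix.traceRight {ρ : Matrix (ι × κ) (ι × κ) ℂ} (hρ : IsDensityMatrix ρ) :
    IsDensityMatrix (partialTraceRight ρ) where
  posSemidef := by
    have hsum : partialTraceRight ρ = ∑ k, ρ.submatrix (fun i ↦ (i, k)) (fun i ↦ (i, k)) := by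
      ext i i'
      simp [partialTraceRight, Matrix.sum_apply]
    rw [hsum]
    exact posSemidef_sum _ fun k _ ↦ hρ.posSemidef.submatrix _
  trace_eq_one := by
    rw [← hρ.trace_eq_one]
    simp [trace, partialTraceRight, Fintype.sum_prod_type]

lemma IsDensityMatrix.traceLeft {ρ : Matrix (ι × κ) (ι × κ) ℂ} (hρ : IsDensityMatrix ρ) :
    IsDensityMatrix (partialTraceLeft ρ) :=
  (hρ.submatrix_equiv (Equiv.prodComm κ ι)).traceRight

lemma trace_mul_partialTraceRight [DecidableEq κ] [CommSemiring R] (X : Matrix ι ι R)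
    (ρ : Matrix (ι × κ) (ι × κ) R) :
    (X * partialTraceRight ρ).trace = (X ⊗ₖ (1 : Matrix κ κ R) * ρ).trace := by
  simp only [trace, diag_apply, mul_apply, partialTraceRight, of_apply, Fintype.sum_prod_type,
    kroneckerMap_apply, one_apply, mul_ite, mul_one, mul_zero, ite_mul, zero_mul,
    Finset.sum_ite_eq, Finset.mem_univ, if_true, Finset.mul_sum]
  exact Finset.sum_congr rfl fun i _ ↦ Finset.sum_comm

variable [CommSemiring R] [StarRing R]

lemma partialTraceRight_kronecker_conj [DecidableEq κ] (ρ : Matrix (ι × κ) (ι × κ) R)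
    (U : Matrix ι ι R) {V : Matrix κ κ R} (hV : V ∈ unitary (Matrix κ κ R)) :
    partialTraceRight ((U ⊗ₖ V)ᴴ * ρ * (U ⊗ₖ V)) = Uᴴ * partialTraceRight ρ * U := by
  refine ext_iff_trace_mul_left.mpr fun X ↦ ?_
  calc (X * partialTraceRight ((U ⊗ₖ V)ᴴ * ρ * (U ⊗ₖ V))).trace
      = ((U ⊗ₖ V) * (X ⊗ₖ (1 : Matrix κ κ R)) * (U ⊗ₖ V)ᴴ * ρ).trace := by
        rw [trace_mul_partialTraceRight, ← mul_assoc, trace_mul_comm]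
        simp only [mul_assoc]
    _ = ((U * X * Uᴴ) ⊗ₖ (1 : Matrix κ κ R) * ρ).trace := by
        rw [conjTranspose_kronecker, ← mul_kronecker_mul, ← mul_kronecker_mul, mul_one,
          ← star_eq_conjTranspose V, Unitary.mul_star_self_of_mem hV]
    _ = (X * (Uᴴ * partialTraceRight ρ * U)).trace := by
        rw [← trace_mul_partialTraceRight, trace_mul_comm X, mul_assoc, trace_mul_comm]
        simp only [mul_assoc]

lemma partialTraceLeft_kronecker_conj [DecidableEq ι] (ρ : Matrix (ι × κ) (ι × κ) R)
    {U : Matrix ι ι R} (hU : U ∈ unitary (Matrix ι ι R)) (V : Matrix κ κ R) :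
    partialTraceLeft ((U ⊗ₖ V)ᴴ * ρ * (U ⊗ₖ V)) = Vᴴ * partialTraceLeft ρ * V := by
  let e := Equiv.prodComm κ ι
  have kronecker_swap : V ⊗ₖ U = (U ⊗ₖ V).submatrix e e := by
    ext x y
    exact mul_comm _ _
  have conj_swap : (V ⊗ₖ U)ᴴ * ρ.submatrix e e * (V ⊗ₖ U) =
      ((U ⊗ₖ V)ᴴ * ρ * (U ⊗ₖ V)).submatrix e e := by
    rw [kronecker_swap, conjTranspose_submatrix, submatrix_mul_equiv, submatrix_mul_equiv]
  exact (congrArg partialTraceRight conj_swap).symm.trans (partialTraceRight_kronecker_conj _ V hU)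

end DensityMatrices

section VonNeumannEntropy

open Matrix
open scoped ComplexOrder Kronecker

variable {ι κ : Type} [Fintype ι] [DecidableEq ι] [Fintype κ] [DecidableEq κ]

lemma vnEntropy_of_isHermitian {ρ : Matrix ι ι ℂ} (hρ : ρ.IsHermitian) :
    vnEntropy ρ = ∑ i, Real.negMulLog (hρ.eigenvalues i) :=
  dif_pos hρ

lemma vnEntropy_eq_sum_roots_charpoly {ρ : Matrix ι ι ℂ} (hρ : ρ.IsHermitian) :
    vnEntropy ρ = (ρ.charpoly.roots.map fun z ↦ Real.negMulLog z.re).sum := by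
  rw [hρ.roots_charpoly_eq_eigenvalues, vnEntropy_of_isHermitian hρ, Multiset.map_map]
  rfl

lemma vnEntropy_congr_charpoly {ρ : Matrix ι ι ℂ} {σ : Matrix κ κ ℂ} (hρ : ρ.IsHermitian)
    (hσ : σ.IsHermitian) (k l : ℕ)
    (h : Polynomial.X ^ k * ρ.charpoly = Polynomial.X ^ l * σ.charpoly) :
    vnEntropy ρ = vnEntropy σ := by
  have sum_roots (j : ℕ) {p : Polynomial ℂ} (hp : p.Monic) :
      ((Polynomial.X ^ j * p).roots.map fun z : ℂ ↦ Real.negMulLog z.re).sum =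
        (p.roots.map fun z ↦ Real.negMulLog z.re).sum := by
    rw [Polynomial.roots_mul ((Polynomial.monic_X_pow j).mul hp).ne_zero]
    simp [Multiset.map_nsmul, Multiset.sum_nsmul]
  rw [vnEntropy_eq_sum_roots_charpoly hρ, vnEntropy_eq_sum_roots_charpoly hσ,
    ← sum_roots k ρ.charpoly_monic, ← sum_roots l σ.charpoly_monic, h]

lemma vnEntropy_submatrix_equiv {ρ : Matrix ι ι ℂ} (hρ : ρ.IsHermitian) (e : κ ≃ ι) :
    vnEntropy (ρ.submatrix e e) = vnEntropy ρ :=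
  vnEntropy_congr_charpoly (hρ.submatrix e) hρ 0 0 <|
    congrArg (Polynomial.X ^ 0 * ·) (charpoly_reindex e.symm ρ)

lemma vnEntropy_mul_conjTranspose_eq_transpose (M : Matrix ι κ ℂ) :
    vnEntropy (M * Mᴴ) = vnEntropy (Mᵀ * Mᵀᴴ) := by
  refine vnEntropy_congr_charpoly (isHermitian_mul_conjTranspose_self M)
    (isHermitian_mul_conjTranspose_self Mᵀ) (Fintype.card κ) (Fintype.card ι) ?_
  rw [charpoly_mul_comm', ← charpoly_transpose (Mᴴ * M), transpose_mul]
  rfl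

lemma vnEntropy_unitary_conj {ρ : Matrix ι ι ℂ} (hρ : ρ.IsHermitian) {U : Matrix ι ι ℂ}
    (hU : U ∈ unitary (Matrix ι ι ℂ)) : vnEntropy (Uᴴ * ρ * U) = vnEntropy ρ := by
  refine vnEntropy_congr_charpoly (isHermitian_conjTranspose_mul_mul U hρ) hρ 0 0 ?_
  rw [charpoly_mul_comm, ← mul_assoc, ← star_eq_conjTranspose, Unitary.mul_star_self_of_mem hU,
    one_mul]

lemma vnEntropy_diagonal_ofReal (p : ι → ℝ) :
    vnEntropy (diagonal fun i ↦ (p i : ℂ)) = ∑ i, Real.negMulLog (p i) := by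
  have hp : (diagonal fun i ↦ (p i : ℂ)).IsHermitian := by
    simp [IsHermitian, diagonal_conjTranspose, Pi.star_def]
  have roots_charpoly : (diagonal fun i ↦ (p i : ℂ)).charpoly.roots =
      Finset.univ.val.map fun i ↦ (p i : ℂ) := by
    rw [charpoly_diagonal, ← Polynomial.roots_multiset_prod_X_sub_C (Finset.univ.val.map _),
      Multiset.map_map]
    rfl
  rw [vnEntropy_eq_sum_roots_charpoly hp, roots_charpoly, Multiset.map_map]
  rfl

lemma eigenvectorUnitary_conjTranspose_mul_mul {ρ : Matrix ι ι ℂ} (hρ : ρ.IsHermitian) :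
    (hρ.eigenvectorUnitary : Matrix ι ι ℂ)ᴴ * ρ * hρ.eigenvectorUnitary =
      diagonal fun i ↦ (hρ.eigenvalues i : ℂ) := by
  exact (Unitary.conjStarAlgAut_star_apply _ _).symm.trans
    hρ.conjStarAlgAut_star_eigenvectorUnitary

lemma IsDensityMatrix.sum_eigenvalues {ρ : Matrix ι ι ℂ} (hρ : IsDensityMatrix ρ) :
    ∑ i, hρ.isHermitian.eigenvalues i = 1 := by
  have hsum := hρ.isHermitian.trace_eq_sum_eigenvalues.symm.trans hρ.trace_eq_one
  rw [← RCLike.ofReal_sum] at hsum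
  exact Complex.ofReal_eq_one.mp hsum

lemma vnEntropy_kronecker {ρ : Matrix ι ι ℂ} {σ : Matrix κ κ ℂ} (hρ : IsDensityMatrix ρ)
    (hσ : IsDensityMatrix σ) : vnEntropy (ρ ⊗ₖ σ) = vnEntropy ρ + vnEntropy σ := by
  set U := hρ.isHermitian.eigenvectorUnitary
  set V := hσ.isHermitian.eigenvectorUnitary
  have hρσ : (ρ ⊗ₖ σ).IsHermitian := by
    rw [IsHermitian, conjTranspose_kronecker, hρ.isHermitian, hσ.isHermitian]
  have diagonalized : ((U : Matrix ι ι ℂ) ⊗ₖ (V : Matrix κ κ ℂ))ᴴ * (ρ ⊗ₖ σ) * (U ⊗ₖ V) =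
      diagonal fun x : ι × κ ↦
        ((hρ.isHermitian.eigenvalues x.1 * hσ.isHermitian.eigenvalues x.2 : ℝ) : ℂ) := by
    rw [conjTranspose_kronecker, ← mul_kronecker_mul, ← mul_kronecker_mul,
      eigenvectorUnitary_conjTranspose_mul_mul, eigenvectorUnitary_conjTranspose_mul_mul,
      diagonal_kronecker_diagonal]
    simp
  rw [← vnEntropy_unitary_conj hρσ (kronecker_mem_unitary U.2 V.2), diagonalized,
    vnEntropy_diagonal_ofReal, Fintype.sum_prod_type, vnEntropy_of_isHermitian hρ.isHermitian,
    vnEntropy_of_isHermitian hσ.isHermitian]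
  simp only [Real.negMulLog_mul, Finset.sum_add_distrib, ← Finset.sum_mul, ← Finset.mul_sum,
    hρ.sum_eigenvalues, hσ.sum_eigenvalues, one_mul]

lemma IsDensityMatrix.vnEntropy_le_log_card {ρ : Matrix ι ι ℂ} (hρ : IsDensityMatrix ρ) :
    vnEntropy ρ ≤ Real.log (Fintype.card ι) := by
  have hsum := hρ.sum_eigenvalues
  have hcard : 0 < (Fintype.card ι : ℝ) := by
    rcases isEmpty_or_nonempty ι with hι | hι
    · simp at hsum
    · exact_mod_cast Fintype.card_pos
  have jensen := Real.concaveOn_negMulLog.le_map_sum (t := Finset.univ)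
    (w := fun _ : ι ↦ (Fintype.card ι : ℝ)⁻¹) (fun _ _ ↦ by positivity)
    (by simp [hcard.ne']) (fun i _ ↦ hρ.posSemidef.eigenvalues_nonneg i)
  simp only [smul_eq_mul, ← Finset.mul_sum, hsum, ← vnEntropy_of_isHermitian hρ.isHermitian,
    mul_one] at jensen
  rw [Real.negMulLog, Real.log_inv, neg_mul_neg] at jensen
  exact le_of_mul_le_mul_left jensen (inv_pos.mpr hcard)

lemma sum_norm_sq_row_of_mem_unitary {U : Matrix ι ι ℂ} (hU : U ∈ unitary (Matrix ι ι ℂ)) (j : ι) :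
    ∑ i, ‖U j i‖ ^ 2 = 1 := by
  have hjj : (U * star U) j j = (1 : Matrix ι ι ℂ) j j := by
    rw [Unitary.mul_star_self_of_mem hU]
  simp only [mul_apply, star_apply, Complex.star_def, Complex.mul_conj', one_apply_eq] at hjj
  exact_mod_cast hjj

lemma sum_norm_sq_col_of_mem_unitary {U : Matrix ι ι ℂ} (hU : U ∈ unitary (Matrix ι ι ℂ)) (i : ι) :
    ∑ j, ‖U j i‖ ^ 2 = 1 := by
  simpa [star_apply] using sum_norm_sq_row_of_mem_unitary (Unitary.star_mem hU) i

lemma re_diag_eq_sum_norm_sq_mul_eigenvalues {ρ : Matrix ι ι ℂ} (hρ : ρ.IsHermitian) (j : ι) :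
    (ρ j j).re =
      ∑ i, ‖(hρ.eigenvectorUnitary : Matrix ι ι ℂ) j i‖ ^ 2 * hρ.eigenvalues i := by
  conv_lhs => rw [hρ.spectral_theorem, Unitary.conjStarAlgAut_apply, mul_apply, Complex.re_sum]
  refine Finset.sum_congr rfl fun i _ ↦ ?_
  rw [mul_diagonal, star_apply, Complex.star_def, mul_right_comm, Complex.mul_conj']
  exact_mod_cast Complex.re_ofReal_mul _ _

lemma sum_norm_sq_mul_negMulLog_eigenvalues_le {ρ : Matrix ι ι ℂ} (hρ : ρ.PosSemidef) (j : ι) :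
    ∑ i, ‖(hρ.isHermitian.eigenvectorUnitary : Matrix ι ι ℂ) j i‖ ^ 2 *
      Real.negMulLog (hρ.isHermitian.eigenvalues i) ≤ Real.negMulLog (ρ j j).re := by
  rw [re_diag_eq_sum_norm_sq_mul_eigenvalues hρ.isHermitian]
  exact Real.concaveOn_negMulLog.le_map_sum (fun _ _ ↦ by positivity)
    (sum_norm_sq_row_of_mem_unitary hρ.isHermitian.eigenvectorUnitary.2 j)
    (fun i _ ↦ hρ.eigenvalues_nonneg i)

lemma vnEntropy_eq_sum_sum_norm_sq_mul_negMulLog_eigenvalues {ρ : Matrix ι ι ℂ}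
    (hρ : ρ.IsHermitian) :
    vnEntropy ρ = ∑ j, ∑ i, ‖(hρ.eigenvectorUnitary : Matrix ι ι ℂ) j i‖ ^ 2 *
      Real.negMulLog (hρ.eigenvalues i) := by
  rw [Finset.sum_comm, vnEntropy_of_isHermitian hρ]
  simp only [← Finset.sum_mul, sum_norm_sq_col_of_mem_unitary hρ.eigenvectorUnitary.2, one_mul]

lemma vnEntropy_le_sum_negMulLog_diag {ρ : Matrix ι ι ℂ} (hρ : ρ.PosSemidef) :
    vnEntropy ρ ≤ ∑ j, Real.negMulLog (ρ j j).re := by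
  rw [vnEntropy_eq_sum_sum_norm_sq_mul_negMulLog_eigenvalues hρ.isHermitian]
  exact Finset.sum_le_sum fun j _ ↦ sum_norm_sq_mul_negMulLog_eigenvalues_le hρ j

lemma isDiag_of_vnEntropy_eq_sum_negMulLog_diag {ρ : Matrix ι ι ℂ} (hρ : ρ.PosSemidef)
    (h : vnEntropy ρ = ∑ j, Real.negMulLog (ρ j j).re) : ρ.IsDiag := by
  let U : Matrix ι ι ℂ := hρ.isHermitian.eigenvectorUnitary
  have hU : U ∈ unitary (Matrix ι ι ℂ) := hρ.isHermitian.eigenvectorUnitary.2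
  let p := hρ.isHermitian.eigenvalues
  have eigenvalue_eq (j i : ι) (hji : U j i ≠ 0) : p i = (ρ j j).re := by
    rw [vnEntropy_eq_sum_sum_norm_sq_mul_negMulLog_eigenvalues hρ.isHermitian,
      Finset.sum_eq_sum_iff_of_le fun j _ ↦ sum_norm_sq_mul_negMulLog_eigenvalues_le hρ j] at h
    have hj := (h j (Finset.mem_univ j)).symm
    rw [re_diag_eq_sum_norm_sq_mul_eigenvalues hρ.isHermitian] at hj ⊢
    exact (Real.strictConcaveOn_negMulLog.map_sum_eq_iff' (fun _ _ ↦ by positivity)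
      (sum_norm_sq_row_of_mem_unitary hU j) (fun i _ ↦ hρ.eigenvalues_nonneg i)).mp hj i
      (Finset.mem_univ i) (by simpa using hji)
  have commute : U * diagonal (fun i ↦ (p i : ℂ)) = diagonal (fun j ↦ ((ρ j j).re : ℂ)) * U := by
    ext j i
    by_cases hji : U j i = 0
    · simp [hji]
    · simp [eigenvalue_eq j i hji, mul_comm]
  have hdiag : ρ = diagonal fun j ↦ ((ρ j j).re : ℂ) :=
    calc ρ = U * diagonal (fun i ↦ (p i : ℂ)) * star U :=
          hρ.isHermitian.spectral_theorem.trans (Unitary.conjStarAlgAut_apply _ _)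
      _ = diagonal fun j ↦ ((ρ j j).re : ℂ) := by
          rw [commute, mul_assoc, Unitary.mul_star_self_of_mem hU, mul_one]
  rw [hdiag]
  exact isDiag_diagonal _


lemma vnEntropy_of_isDiag {ρ : Matrix ι ι ℂ} (hρ : ρ.IsHermitian) (hdiag : ρ.IsDiag) :
    vnEntropy ρ = ∑ i, Real.negMulLog (ρ i i).re := by
  rw [← vnEntropy_diagonal_ofReal]
  congr 1
  conv_lhs => rw [← hdiag.diagonal_diag]
  exact congrArg diagonal (funext fun i ↦ (hρ.coe_re_apply_self i).symm)

namespace IsDensityMatrix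

variable {ρ : Matrix (ι × κ) (ι × κ) ℂ} (hρ : IsDensityMatrix ρ)
include hρ

lemma sum_negMulLog_diag_le_of_isDiag_traces (hright : (partialTraceRight ρ).IsDiag)
    (hleft : (partialTraceLeft ρ).IsDiag) :
    ∑ x, Real.negMulLog (ρ x x).re ≤
      vnEntropy (partialTraceRight ρ) + vnEntropy (partialTraceLeft ρ) := by
  rw [vnEntropy_of_isDiag hρ.traceRight.isHermitian hright,
    vnEntropy_of_isDiag hρ.traceLeft.isHermitian hleft]
  exact sum_negMulLog_le_add_marginals hρ.re_diag_nonneg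
    (fun i ↦ (Complex.re_sum _ _).symm) (fun k ↦ (Complex.re_sum _ _).symm) hρ.sum_re_diag

lemma eq_kronecker_of_isDiag_traces (hright : (partialTraceRight ρ).IsDiag)
    (hleft : (partialTraceLeft ρ).IsDiag)
    (heq : vnEntropy ρ = vnEntropy (partialTraceRight ρ) + vnEntropy (partialTraceLeft ρ)) :
    ρ = partialTraceRight ρ ⊗ₖ partialTraceLeft ρ := by
  have hdiag_eq : vnEntropy ρ = ∑ x, Real.negMulLog (ρ x x).re :=
    (vnEntropy_le_sum_negMulLog_diag hρ.posSemidef).antisymm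
      (heq ▸ hρ.sum_negMulLog_diag_le_of_isDiag_traces hright hleft)
  have hdiag : ρ.IsDiag := isDiag_of_vnEntropy_eq_sum_negMulLog_diag hρ.posSemidef hdiag_eq
  rw [hdiag_eq, vnEntropy_of_isDiag hρ.traceRight.isHermitian hright,
    vnEntropy_of_isDiag hρ.traceLeft.isHermitian hleft] at heq
  have hprod := eq_mul_marginals_of_sum_negMulLog_eq_add hρ.re_diag_nonneg
    (fun i ↦ (Complex.re_sum _ _).symm) (fun k ↦ (Complex.re_sum _ _).symm) hρ.sum_re_diag heq
  ext ⟨i, k⟩ ⟨i', k'⟩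
  by_cases h : (i, k) = (i', k')
  · obtain ⟨rfl, rfl⟩ := Prod.mk.inj h
    rw [kroneckerMap_apply, ← hρ.isHermitian.coe_re_apply_self,
      ← hρ.traceRight.isHermitian.coe_re_apply_self, ← hρ.traceLeft.isHermitian.coe_re_apply_self]
    exact_mod_cast hprod i k
  · rw [hdiag h, hright.kronecker hleft h]

lemma exists_unitary_isDiag_traces_kronecker_conj :
    ∃ U ∈ unitary (Matrix ι ι ℂ), ∃ V ∈ unitary (Matrix κ κ ℂ),
      (partialTraceRight ((U ⊗ₖ V)ᴴ * ρ * (U ⊗ₖ V))).IsDiag ∧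
        (partialTraceLeft ((U ⊗ₖ V)ᴴ * ρ * (U ⊗ₖ V))).IsDiag := by
  have hU := hρ.traceRight.isHermitian.eigenvectorUnitary.2
  have hV := hρ.traceLeft.isHermitian.eigenvectorUnitary.2
  refine ⟨_, hU, _, hV, ?_, ?_⟩
  · rw [partialTraceRight_kronecker_conj _ _ hV, eigenvectorUnitary_conjTranspose_mul_mul]
    exact isDiag_diagonal _
  · rw [partialTraceLeft_kronecker_conj _ hU, eigenvectorUnitary_conjTranspose_mul_mul]
    exact isDiag_diagonal _

theorem vnEntropy_le_add_traces :
    vnEntropy ρ ≤ vnEntropy (partialTraceRight ρ) + vnEntropy (partialTraceLeft ρ) := by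
  obtain ⟨U, hU, V, hV, hright, hleft⟩ := hρ.exists_unitary_isDiag_traces_kronecker_conj
  have hUV := kronecker_mem_unitary hU hV
  rw [← vnEntropy_unitary_conj hρ.isHermitian hUV,
    ← vnEntropy_unitary_conj hρ.traceRight.isHermitian hU,
    ← vnEntropy_unitary_conj hρ.traceLeft.isHermitian hV,
    ← partialTraceRight_kronecker_conj ρ U hV, ← partialTraceLeft_kronecker_conj ρ hU V]
  exact (vnEntropy_le_sum_negMulLog_diag (hρ.unitary_conj hUV).posSemidef).trans
    ((hρ.unitary_conj hUV).sum_negMulLog_diag_le_of_isDiag_traces hright hleft)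

theorem eq_kronecker_of_vnEntropy_eq_add_traces
    (heq : vnEntropy ρ = vnEntropy (partialTraceRight ρ) + vnEntropy (partialTraceLeft ρ)) :
    ρ = partialTraceRight ρ ⊗ₖ partialTraceLeft ρ := by
  obtain ⟨U, hU, V, hV, hright, hleft⟩ := hρ.exists_unitary_isDiag_traces_kronecker_conj
  have hUV := kronecker_mem_unitary hU hV
  rw [← vnEntropy_unitary_conj hρ.isHermitian hUV,
    ← vnEntropy_unitary_conj hρ.traceRight.isHermitian hU,
    ← vnEntropy_unitary_conj hρ.traceLeft.isHermitian hV,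
    ← partialTraceRight_kronecker_conj ρ U hV, ← partialTraceLeft_kronecker_conj ρ hU V] at heq
  have hconj := (hρ.unitary_conj hUV).eq_kronecker_of_isDiag_traces hright hleft heq
  rw [partialTraceRight_kronecker_conj ρ U hV, partialTraceLeft_kronecker_conj ρ hU V,
    mul_kronecker_mul, mul_kronecker_mul, ← conjTranspose_kronecker] at hconj
  have hunit : IsUnit (U ⊗ₖ V) := Unitary.isUnit_coe (U := ⟨_, hUV⟩)
  exact hunit.star.mul_left_cancel (hunit.mul_right_cancel hconj)

end IsDensityMatrix

end VonNeumannEntropy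

section Restriction

open Function

variable {ι : Type*}

lemma restrict_surjective {α : Type*} [Nonempty α] (s : Finset ι) :
    Surjective (s.restrict : (ι → α) → s → α) :=
  Subtype.surjective_restrict (· ∈ s)

variable [DecidableEq ι] {π : ι → Type*} {s t : Finset ι}

lemma restrict_updateFinset_of_disjoint (hst : Disjoint s t) (x : ∀ i, π i) (y : ∀ i : t, π i) :
    s.restrict (updateFinset x t y) = s.restrict x :=
  funext fun i ↦ dif_neg (Finset.disjoint_left.mp hst i.2)

lemma piFinsetUnion_restrict (hst : Disjoint s t) (x : ∀ i, π i) :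
    Equiv.piFinsetUnion π hst (s.restrict x, t.restrict x) = (s ∪ t).restrict x := by
  funext i
  rcases Finset.mem_union.mp i.2 with hi | hi
  · exact Equiv.piFinsetUnion_left _ hst hi i.2
  · exact Equiv.piFinsetUnion_right _ hst hi i.2

lemma piFinsetUnion_restrict_left (hst : Disjoint s t) (x : ∀ i, π i) (z : ∀ i : t, π i) :
    Equiv.piFinsetUnion π hst (s.restrict x, z) = (s ∪ t).restrict (updateFinset x t z) := by
  rw [← piFinsetUnion_restrict hst, restrict_updateFinset_of_disjoint hst, restrict_updateFinset]

lemma piFinsetUnion_restrict_right (hst : Disjoint s t) (x : ∀ i, π i) (y : ∀ i : s, π i) :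
    Equiv.piFinsetUnion π hst (y, t.restrict x) = (s ∪ t).restrict (updateFinset x s y) := by
  rw [← piFinsetUnion_restrict hst, restrict_updateFinset_of_disjoint hst.symm,
    restrict_updateFinset]

end Restriction

section Complements

variable {α : Type*} [Fintype α] [DecidableEq α] {s t : Finset α}

lemma compl_eq_union_compl_union (hst : Disjoint s t) : sᶜ = t ∪ (s ∪ t)ᶜ := by
  rw [Finset.compl_union, Finset.union_inter_distrib_left, Finset.union_compl, Finset.inter_univ,
    Finset.union_eq_right.mpr (Finset.subset_compl_iff_disjoint_left.mpr hst)]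

lemma disjoint_compl_union_right (s t : Finset α) : Disjoint t (s ∪ t)ᶜ :=
  disjoint_compl_right.mono_left Finset.subset_union_right

end Complements

section ReducedDensity

open Matrix Function
open scoped ComplexOrder Kronecker

variable {m : ℕ} {ψ : (Fin m → Fin 2) → ℂ} {X Y Z : Finset (Fin m)}

lemma glue_restrict_left (X : Finset (Fin m)) (x : Fin m → Fin 2) (w : {i // i ∈ Xᶜ} → Fin 2) :
    glue X (X.restrict x) w = updateFinset x Xᶜ w := by
  funext i
  by_cases hi : i ∈ X <;> simp [glue, updateFinset, hi]

lemma glue_restrict_right (X : Finset (Fin m)) (u : {i // i ∈ X} → Fin 2) (x : Fin m → Fin 2) :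
    glue X u (Xᶜ.restrict x) = updateFinset x X u := by
  funext i
  by_cases hi : i ∈ X <;> simp [glue, updateFinset, hi]

lemma glue_bijective (X : Finset (Fin m)) :
    Bijective fun p : ({i // i ∈ X} → Fin 2) × ({i // i ∈ Xᶜ} → Fin 2) ↦ glue X p.1 p.2 := by
  refine bijective_iff_has_inverse.mpr
    ⟨fun x ↦ (X.restrict x, Xᶜ.restrict x), fun p ↦ ?_, fun x ↦ ?_⟩
  · refine Prod.ext (funext fun i ↦ ?_) (funext fun i ↦ ?_)
    · exact dif_pos i.2
    · exact dif_neg (Finset.mem_compl.mp i.2)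
  · exact (glue_restrict_left X x _).trans (updateFinset_restrict x)

/-- The entries of `reducedDensity ψ X`, with rows and columns indexed by full bit strings of which
only the bits in `X` matter, so that reductions to different sets of positions share one index
type. -/
def reducedKernel (ψ : (Fin m → Fin 2) → ℂ) (X : Finset (Fin m)) (x y : Fin m → Fin 2) : ℂ :=
  reducedDensity ψ X (X.restrict x) (X.restrict y)

lemma reducedKernel_eq_sum (ψ : (Fin m → Fin 2) → ℂ) (X : Finset (Fin m)) (x y : Fin m → Fin 2) :
    reducedKernel ψ X x y =
      ∑ w, ψ (updateFinset x Xᶜ w) * starRingEnd ℂ (ψ (updateFinset y Xᶜ w)) := by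
  simp only [reducedKernel, reducedDensity, glue_restrict_left]

lemma reducedKernel_updateFinset (hXZ : Disjoint X Z) (x y : Fin m → Fin 2)
    (z : {i // i ∈ Z} → Fin 2) :
    reducedKernel ψ X (updateFinset x Z z) (updateFinset y Z z) = reducedKernel ψ X x y := by
  simp only [reducedKernel, restrict_updateFinset_of_disjoint hXZ]

lemma sum_reducedKernel_union (hXZ : Disjoint X Z) (x y : Fin m → Fin 2) :
    ∑ z, reducedKernel ψ (X ∪ Z) (updateFinset x Z z) (updateFinset y Z z) =
      reducedKernel ψ X x y := by
  have hdisj : Disjoint Z (X ∪ Z)ᶜ := disjoint_compl_union_right X Z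
  simp only [reducedKernel_eq_sum, updateFinset_updateFinset hdisj]
  rw [compl_eq_union_compl_union hXZ, ← Fintype.sum_prod_type']
  exact (Equiv.piFinsetUnion (fun _ ↦ Fin 2) hdisj).sum_comp fun w ↦
    ψ (updateFinset x _ w) * starRingEnd ℂ (ψ (updateFinset y _ w))

lemma isDensityMatrix_reducedDensity (hψ : ∑ x, ‖ψ x‖ ^ 2 = 1) (X : Finset (Fin m)) :
    IsDensityMatrix (reducedDensity ψ X) where
  posSemidef := posSemidef_self_mul_conjTranspose (of fun u w ↦ ψ (glue X u w))
  trace_eq_one := by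
    have hsum := (glue_bijective X).sum_comp fun x ↦ ψ x * starRingEnd ℂ (ψ x)
    rw [Fintype.sum_prod_type] at hsum
    refine hsum.trans ?_
    simp only [Complex.mul_conj']
    exact_mod_cast hψ

lemma Sent_le_card_mul_log_two (hψ : ∑ x, ‖ψ x‖ ^ 2 = 1) (X : Finset (Fin m)) :
    Sent ψ X ≤ X.card * Real.log 2 := by
  simpa [Sent] using (isDensityMatrix_reducedDensity hψ X).vnEntropy_le_log_card

lemma Sent_compl (ψ : (Fin m → Fin 2) → ℂ) (X : Finset (Fin m)) : Sent ψ Xᶜ = Sent ψ X := by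
  let M : Matrix ({i // i ∈ X} → Fin 2) ({i // i ∈ Xᶜ} → Fin 2) ℂ := of fun u w ↦ ψ (glue X u w)
  have hcompl : reducedDensity ψ Xᶜ = Mᵀ * Mᵀᴴ := by
    ext w w'
    obtain ⟨x, rfl⟩ := restrict_surjective Xᶜ w
    obtain ⟨y, rfl⟩ := restrict_surjective Xᶜ w'
    change reducedKernel ψ Xᶜ x y =
      ∑ u, ψ (glue X u (Xᶜ.restrict x)) * starRingEnd ℂ (ψ (glue X u (Xᶜ.restrict y)))
    simp only [reducedKernel_eq_sum, glue_restrict_right]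
    rw [compl_compl]
  rw [Sent, hcompl, ← vnEntropy_mul_conjTranspose_eq_transpose]
  rfl

/-- The joint state of the disjoint sets `X` and `Y`, as a matrix on the tensor product of the
two systems. -/
def jointDensity (ψ : (Fin m → Fin 2) → ℂ) (hXY : Disjoint X Y) :
    Matrix (({i // i ∈ X} → Fin 2) × ({i // i ∈ Y} → Fin 2))
      (({i // i ∈ X} → Fin 2) × ({i // i ∈ Y} → Fin 2)) ℂ :=
  (reducedDensity ψ (X ∪ Y)).submatrix (Equiv.piFinsetUnion (fun _ ↦ Fin 2) hXY)
    (Equiv.piFinsetUnion (fun _ ↦ Fin 2) hXY)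

lemma partialTraceRight_jointDensity (hXY : Disjoint X Y) :
    partialTraceRight (jointDensity ψ hXY) = reducedDensity ψ X := by
  ext u v
  obtain ⟨x, rfl⟩ := restrict_surjective X u
  obtain ⟨y, rfl⟩ := restrict_surjective X v
  change _ = reducedKernel ψ X x y
  rw [← sum_reducedKernel_union hXY]
  simp only [partialTraceRight, jointDensity, of_apply, submatrix_apply, reducedKernel,
    piFinsetUnion_restrict_left]

lemma partialTraceLeft_jointDensity (hXY : Disjoint X Y) :
    partialTraceLeft (jointDensity ψ hXY) = reducedDensity ψ Y := by
  ext u v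
  obtain ⟨x, rfl⟩ := restrict_surjective Y u
  obtain ⟨y, rfl⟩ := restrict_surjective Y v
  change _ = reducedKernel ψ Y x y
  rw [← sum_reducedKernel_union hXY.symm, Finset.union_comm]
  simp only [partialTraceLeft, jointDensity, of_apply, submatrix_apply, reducedKernel,
    piFinsetUnion_restrict_right]

/-- The states of `X` and `Y` in `ψ` are independent: `ρ_{X ∪ Y} = ρ_X ⊗ ρ_Y`. -/
def Uncorrelated (ψ : (Fin m → Fin 2) → ℂ) (X Y : Finset (Fin m)) : Prop :=
  ∀ x y, reducedKernel ψ (X ∪ Y) x y = reducedKernel ψ X x y * reducedKernel ψ Y x y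

lemma Uncorrelated.of_union_right (h : Uncorrelated ψ X (Y ∪ Z)) (hXZ : Disjoint X Z)
    (hYZ : Disjoint Y Z) : Uncorrelated ψ X Y := fun x y ↦ by
  rw [← sum_reducedKernel_union (Finset.disjoint_union_left.mpr ⟨hXZ, hYZ⟩),
    ← sum_reducedKernel_union hYZ, Finset.mul_sum, Finset.union_assoc]
  simp only [h _ _, reducedKernel_updateFinset hXZ]

lemma uncorrelated_iff_jointDensity_eq_kronecker (hXY : Disjoint X Y) :
    Uncorrelated ψ X Y ↔ jointDensity ψ hXY = reducedDensity ψ X ⊗ₖ reducedDensity ψ Y := by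
  have hentry (x y : Fin m → Fin 2) : jointDensity ψ hXY (X.restrict x, Y.restrict x)
      (X.restrict y, Y.restrict y) = reducedKernel ψ (X ∪ Y) x y := by
    simp only [jointDensity, submatrix_apply, reducedKernel, piFinsetUnion_restrict]
  have hsurj (p : ({i // i ∈ X} → Fin 2) × ({i // i ∈ Y} → Fin 2)) :
      ∃ x : Fin m → Fin 2, (X.restrict x, Y.restrict x) = p := by
    obtain ⟨x, hx⟩ := restrict_surjective _ (Equiv.piFinsetUnion (fun _ ↦ Fin 2) hXY p)
    exact ⟨x, (Equiv.piFinsetUnion _ hXY).injective ((piFinsetUnion_restrict hXY x).trans hx)⟩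
  refine ⟨fun h ↦ ?_, fun h x y ↦ ?_⟩
  · ext p q
    obtain ⟨x, rfl⟩ := hsurj p
    obtain ⟨y, rfl⟩ := hsurj q
    rw [hentry, h]
    rfl
  · rw [← hentry, h]
    rfl

lemma vnEntropy_jointDensity (hψ : ∑ x, ‖ψ x‖ ^ 2 = 1) (hXY : Disjoint X Y) :
    vnEntropy (jointDensity ψ hXY) = Sent ψ (X ∪ Y) :=
  vnEntropy_submatrix_equiv (isDensityMatrix_reducedDensity hψ _).isHermitian _

lemma isDensityMatrix_jointDensity (hψ : ∑ x, ‖ψ x‖ ^ 2 = 1) (hXY : Disjoint X Y) :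
    IsDensityMatrix (jointDensity ψ hXY) :=
  (isDensityMatrix_reducedDensity hψ _).submatrix_equiv _

theorem Sent_union_le (hψ : ∑ x, ‖ψ x‖ ^ 2 = 1) (hXY : Disjoint X Y) :
    Sent ψ (X ∪ Y) ≤ Sent ψ X + Sent ψ Y := by
  have hle := (isDensityMatrix_jointDensity hψ hXY).vnEntropy_le_add_traces
  rwa [vnEntropy_jointDensity hψ, partialTraceRight_jointDensity,
    partialTraceLeft_jointDensity] at hle

theorem Sent_union_eq_add_iff_uncorrelated (hψ : ∑ x, ‖ψ x‖ ^ 2 = 1) (hXY : Disjoint X Y) :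
    Sent ψ (X ∪ Y) = Sent ψ X + Sent ψ Y ↔ Uncorrelated ψ X Y := by
  rw [uncorrelated_iff_jointDensity_eq_kronecker hXY, ← vnEntropy_jointDensity hψ hXY]
  refine ⟨fun heq ↦ ?_, fun hprod ↦ ?_⟩
  · have hprod := (isDensityMatrix_jointDensity hψ hXY).eq_kronecker_of_vnEntropy_eq_add_traces
    rw [partialTraceRight_jointDensity, partialTraceLeft_jointDensity] at hprod
    exact hprod heq
  · rw [hprod]
    exact vnEntropy_kronecker (isDensityMatrix_reducedDensity hψ X)
      (isDensityMatrix_reducedDensity hψ Y)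

lemma Sent_union_eq_add_of_union_right (hψ : ∑ x, ‖ψ x‖ ^ 2 = 1) (hXY : Disjoint X Y)
    (hXZ : Disjoint X Z) (hYZ : Disjoint Y Z)
    (h : Sent ψ (X ∪ (Y ∪ Z)) = Sent ψ X + Sent ψ (Y ∪ Z)) :
    Sent ψ (X ∪ Y) = Sent ψ X + Sent ψ Y := by
  rw [Sent_union_eq_add_iff_uncorrelated hψ (Finset.disjoint_union_right.mpr ⟨hXY, hXZ⟩)] at h
  exact (Sent_union_eq_add_iff_uncorrelated hψ hXY).mpr (h.of_union_right hXZ hYZ)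

end ReducedDensity

section AccessStructures

variable {n : ℕ} {Γ : Finset (Fin n) → Prop} {A B M : Finset (Fin n)} {a b c : Fin n}

lemma NoCloning.authorized_compl (hnc : NoCloning Γ) (hA : ¬Γ A) : Γ Aᶜ :=
  (hnc Aᶜ).mpr (by rwa [compl_compl])

lemma NoCloning.not_disjoint (hnc : NoCloning Γ) (hmono : Monotonic Γ) (hA : Γ A) (hB : Γ B) :
    ¬Disjoint A B := fun h ↦
  (hnc B).mp hB (hmono A Bᶜ hA (Finset.subset_compl_iff_disjoint_right.mpr h))

lemma IsMinimal.eq_of_subset (hM : IsMinimal Γ M) (hA : Γ A) (hAM : A ⊆ M) : A = M :=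
  by_contra fun hne ↦ hM.2 A (hAM.ssubset_of_ne hne) hA

lemma IsMinimal.subset_triple (hM : IsMinimal Γ M) (hmono : Monotonic Γ) (hnc : NoCloning Γ)
    (hab : Γ {a, b}) (hac : Γ {a, c}) (hbc : Γ {b, c}) : M ⊆ {a, b, c} := by
  have meets {i j : Fin n} (h : Γ {i, j}) : i ∈ M ∨ j ∈ M := by
    simpa [imp_iff_or_not, or_comm] using hnc.not_disjoint hmono h hM.1
  have meets_ab := meets hab
  have meets_ac := meets hac
  have meets_bc := meets hbc
  have hpair : ({a, b} : Finset (Fin n)) ⊆ M ∨ ({a, c} : Finset (Fin n)) ⊆ M ∨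
      ({b, c} : Finset (Fin n)) ⊆ M := by
    simp only [Finset.insert_subset_iff, Finset.singleton_subset_iff]
    tauto
  rcases hpair with h | h | h
  · rw [← hM.eq_of_subset hab h]; grind
  · rw [← hM.eq_of_subset hac h]; grind
  · rw [← hM.eq_of_subset hbc h]; grind

lemma NoRedundancy.card_le_three (hnr : NoRedundancy Γ) (hmono : Monotonic Γ) (hnc : NoCloning Γ)
    (hab : Γ {a, b}) (hac : Γ {a, c}) (hbc : Γ {b, c}) : n ≤ 3 := by
  have huniv : (Finset.univ : Finset (Fin n)) ⊆ {a, b, c} := fun i _ ↦ by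
    obtain ⟨M, hM, hi⟩ := hnr i
    exact hM.subset_triple hmono hnc hab hac hbc hi
  simpa using (Finset.card_le_card huniv).trans Finset.card_le_three

lemma exists_eq_pairs_of_card_eq_two {α : Type*} [DecidableEq α] {s t : Finset α}
    (hs : s.card = 2) (ht : t.card = 2) (hst : ¬Disjoint s t) (hne : s ≠ t) :
    ∃ a b c, a ≠ b ∧ a ≠ c ∧ b ≠ c ∧ s = {a, b} ∧ t = {a, c} := by
  obtain ⟨a, has, hat⟩ := Finset.not_disjoint_iff.mp hst
  obtain ⟨b, hb⟩ := Finset.card_eq_one.mp (by rw [Finset.card_erase_of_mem has, hs])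
  obtain ⟨c, hc⟩ := Finset.card_eq_one.mp (by rw [Finset.card_erase_of_mem hat, ht])
  obtain rfl : s = {a, b} := by rw [← Finset.insert_erase has, hb]
  obtain rfl : t = {a, c} := by rw [← Finset.insert_erase hat, hc]
  refine ⟨a, b, c, ?_, ?_, ?_, rfl, rfl⟩
  · rintro rfl; simp at hs
  · rintro rfl; simp at ht
  · rintro rfl; exact hne rfl

end AccessStructures

section QuantumSecretSharing

variable {n : ℕ} {Γ : Finset (Fin n) → Prop} {ψ : (Fin (n + 1) → Fin 2) → ℂ}
  {X Y Z : Finset (Fin n)}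

lemma posOf_union (X Y : Finset (Fin n)) : posOf (X ∪ Y) = posOf X ∪ posOf Y :=
  Finset.image_union X Y

lemma disjoint_posOf (hXY : Disjoint X Y) : Disjoint (posOf X) (posOf Y) :=
  (Finset.disjoint_image (Fin.succ_injective n)).mpr hXY

lemma compl_insert_zero_posOf (X : Finset (Fin n)) : (insert 0 (posOf X))ᶜ = posOf Xᶜ := by
  ext i
  refine Fin.cases ?_ (fun j ↦ ?_) i <;> simp [posOf]

/-- The entropy of the joint share of the players in `X`. -/
noncomputable def shareEntropy (ψ : (Fin (n + 1) → Fin 2) → ℂ) (X : Finset (Fin n)) : ℝ :=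
  Sent ψ (posOf X)

lemma Sent_insert_zero_posOf (ψ : (Fin (n + 1) → Fin 2) → ℂ) (X : Finset (Fin n)) :
    Sent ψ (insert 0 (posOf X)) = shareEntropy ψ Xᶜ := by
  rw [← Sent_compl, compl_insert_zero_posOf, shareEntropy]

namespace IsPureQSSState

variable (hψ : IsPureQSSState Γ ψ)
include hψ

lemma shareEntropy_singleton_le (i : Fin n) : shareEntropy ψ {i} ≤ Real.log 2 := by
  simpa [shareEntropy, posOf] using Sent_le_card_mul_log_two hψ.normalized (posOf {i})

lemma shareEntropy_union_le (hXY : Disjoint X Y) :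
    shareEntropy ψ (X ∪ Y) ≤ shareEntropy ψ X + shareEntropy ψ Y := by
  rw [shareEntropy, posOf_union]
  exact Sent_union_le hψ.normalized (disjoint_posOf hXY)

lemma shareEntropy_union_eq_add_of_union_right (hXY : Disjoint X Y) (hXZ : Disjoint X Z)
    (hYZ : Disjoint Y Z)
    (h : shareEntropy ψ (X ∪ (Y ∪ Z)) = shareEntropy ψ X + shareEntropy ψ (Y ∪ Z)) :
    shareEntropy ψ (X ∪ Y) = shareEntropy ψ X + shareEntropy ψ Y := by
  simp only [shareEntropy, posOf_union] at h ⊢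
  exact Sent_union_eq_add_of_union_right hψ.normalized (disjoint_posOf hXY) (disjoint_posOf hXZ)
    (disjoint_posOf hYZ) h

variable (hnc : NoCloning Γ)
include hnc

lemma shareEntropy_eq_compl_add_log_two (hX : Γ X) :
    shareEntropy ψ X = shareEntropy ψ Xᶜ + Real.log 2 := by
  have hrecover := hψ.recover X hX
  have hsecrecy := hψ.secrecy Xᶜ ((hnc X).mp hX)
  rw [Sent_insert_zero_posOf] at hrecover hsecrecy
  rw [compl_compl] at hsecrecy
  simp only [shareEntropy] at hrecover hsecrecy ⊢
  linarith

lemma shareEntropy_add_log_two_le (hXY : Disjoint X Y) (hX : ¬Γ X) :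
    shareEntropy ψ X + Real.log 2 ≤ shareEntropy ψ Y + shareEntropy ψ (X ∪ Y)ᶜ := by
  have hcompl := hψ.shareEntropy_eq_compl_add_log_two hnc (hnc.authorized_compl hX)
  rw [compl_compl] at hcompl
  rw [← hcompl, compl_eq_union_compl_union hXY]
  exact hψ.shareEntropy_union_le (disjoint_compl_union_right X Y)

lemma log_two_le_shareEntropy_compl_union (hXY : Disjoint X Y) (hX : ¬Γ X) (hY : ¬Γ Y) :
    Real.log 2 ≤ shareEntropy ψ (X ∪ Y)ᶜ := by
  have hleX := hψ.shareEntropy_add_log_two_le hnc hXY hX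
  have hleY := hψ.shareEntropy_add_log_two_le hnc hXY.symm hY
  rw [Finset.union_comm] at hleY
  linarith

lemma shareEntropy_eq_of_authorized_union (hXY : Disjoint X Y) (hauth : Γ (X ∪ Y)) (hX : ¬Γ X)
    (hY : shareEntropy ψ Y ≤ Real.log 2) :
    shareEntropy ψ Y = Real.log 2 ∧ shareEntropy ψ (X ∪ Y)ᶜ = shareEntropy ψ X := by
  have hle := hψ.shareEntropy_add_log_two_le hnc hXY hX
  have hunion := hψ.shareEntropy_union_le hXY
  rw [hψ.shareEntropy_eq_compl_add_log_two hnc hauth] at hunion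
  constructor <;> linarith

lemma shareEntropy_compl_eq_add_of_authorized_union (hXY : Disjoint X Y) (hauth : Γ (X ∪ Y))
    (hX : ¬Γ X) (hY : shareEntropy ψ Y ≤ Real.log 2) :
    shareEntropy ψ Xᶜ = shareEntropy ψ Y + shareEntropy ψ (X ∪ Y)ᶜ := by
  obtain ⟨hYeq, hrest⟩ := hψ.shareEntropy_eq_of_authorized_union hnc hXY hauth hX hY
  have hcompl := hψ.shareEntropy_eq_compl_add_log_two hnc (hnc.authorized_compl hX)
  rw [compl_compl] at hcompl
  linarith

lemma shareEntropy_compl_triple_nonpos (hXY : Disjoint X Y) (hXZ : Disjoint X Z)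
    (hYZ : Disjoint Y Z) (hauthY : Γ (X ∪ Y)) (hauthZ : Γ (X ∪ Z)) (hX : ¬Γ X)
    (hleX : shareEntropy ψ X ≤ Real.log 2) (hleY : shareEntropy ψ Y ≤ Real.log 2)
    (hleZ : shareEntropy ψ Z ≤ Real.log 2) : shareEntropy ψ (X ∪ Y ∪ Z)ᶜ ≤ 0 := by
  set D := (X ∪ Y ∪ Z)ᶜ
  have compl_XY : (X ∪ Y)ᶜ = Z ∪ D :=
    compl_eq_union_compl_union (Finset.disjoint_union_left.mpr ⟨hXZ, hYZ⟩)
  have compl_XZ : (X ∪ Z)ᶜ = D ∪ Y := by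
    rw [compl_eq_union_compl_union (Finset.disjoint_union_left.mpr ⟨hXY, hYZ.symm⟩),
      Finset.union_right_comm, Finset.union_comm]
  have disjoint_ZD : Disjoint Z D := disjoint_compl_union_right _ Z
  have disjoint_DY : Disjoint D Y :=
    disjoint_compl_left.mono_right (Finset.subset_union_right.trans Finset.subset_union_left)
  obtain ⟨-, hrestY⟩ := hψ.shareEntropy_eq_of_authorized_union hnc hXY hauthY hX hleY
  obtain ⟨hZ, -⟩ := hψ.shareEntropy_eq_of_authorized_union hnc hXZ hauthZ hX hleZ
  have uncorrelated := hψ.shareEntropy_compl_eq_add_of_authorized_union hnc hXZ hauthZ hX hleZ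
  rw [compl_eq_union_compl_union hXZ, compl_XZ] at uncorrelated
  have hZD := hψ.shareEntropy_union_eq_add_of_union_right disjoint_ZD hYZ.symm disjoint_DY
    uncorrelated
  rw [compl_XY] at hrestY
  linarith

lemma authorized_union_of_authorized_unions (hXY : Disjoint X Y) (hXZ : Disjoint X Z)
    (hYZ : Disjoint Y Z) (hauthY : Γ (X ∪ Y)) (hauthZ : Γ (X ∪ Z)) (hX : ¬Γ X)
    (hleX : shareEntropy ψ X ≤ Real.log 2) (hleY : shareEntropy ψ Y ≤ Real.log 2)
    (hleZ : shareEntropy ψ Z ≤ Real.log 2) : Γ (Y ∪ Z) := by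
  by_contra hauth
  have hlog := hψ.log_two_le_shareEntropy_compl_union hnc
    (Finset.disjoint_union_right.mpr ⟨hXY, hXZ⟩) hX hauth
  rw [← Finset.union_assoc] at hlog
  have hzero := hψ.shareEntropy_compl_triple_nonpos hnc hXY hXZ hYZ hauthY hauthZ hX hleX hleY hleZ
  exact (Real.log_pos one_lt_two).not_ge (hlog.trans hzero)

lemma authorized_pair_of_authorized_pairs {a b c : Fin n} (hab : a ≠ b) (hac : a ≠ c) (hbc : b ≠ c)
    (hauthb : Γ {a, b}) (hauthc : Γ {a, c}) (ha : ¬Γ {a}) : Γ {b, c} :=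
  hψ.authorized_union_of_authorized_unions hnc (Finset.disjoint_singleton.mpr hab)
    (Finset.disjoint_singleton.mpr hac) (Finset.disjoint_singleton.mpr hbc) hauthb hauthc ha
    (hψ.shareEntropy_singleton_le a) (hψ.shareEntropy_singleton_le b)
    (hψ.shareEntropy_singleton_le c)

end IsPureQSSState

end QuantumSecretSharing

theorem stmt17_general {n : ℕ} (hn : 3 < n) (Γ : Finset (Fin n) → Prop)
    (hmono : Monotonic Γ) (hnc : NoCloning Γ) (hnr : NoRedundancy Γ)
    (ψ : (Fin (n + 1) → Fin 2) → ℂ) (hψ : IsPureQSSState Γ ψ) :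
    ∀ A B : Finset (Fin n), IsMinimal Γ A → A.card = 2 →
      IsMinimal Γ B → B.card = 2 → A = B := by
  intro A B hA hAcard hB hBcard
  by_contra hne
  obtain ⟨a, b, c, hab, hac, hbc, rfl, rfl⟩ :=
    exists_eq_pairs_of_card_eq_two hAcard hBcard (hnc.not_disjoint hmono hA.1 hB.1) hne
  have ha : ¬Γ {a} := hA.2 {a} (by grind)
  have hauth : Γ {b, c} := hψ.authorized_pair_of_authorized_pairs hnc hab hac hbc hA.1 hB.1 ha
  exact hn.not_ge (hnr.card_le_three hmono hnc hA.1 hB.1 hauth)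

theorem stmt17 (Γ : Finset (Fin 6) → Prop)
    (hmono : Monotonic Γ) (hnc : NoCloning Γ) (hnr : NoRedundancy Γ)
    (ψ : (Fin (6 + 1) → Fin 2) → ℂ) (hψ : IsPureQSSState Γ ψ) :
    ∀ A B : Finset (Fin 6), IsMinimal Γ A → A.card = 2 →
      IsMinimal Γ B → B.card = 2 → A = B := by
  exact stmt17_general (by norm_num) Γ hmono hnc hnr ψ hψ
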